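/- There exists a function G, smooth on ℝ² \ {(0,0)} (one may take G(x,y) = (x⁴ + y⁴ − 6x²y²) · log(x² + y²)), such that all second partial derivatives ∂ᵢ∂ⱼ(ΔG), i,j ∈ {1,2}, are bounded on the punctured unit ball B₁ \ {0}, yet the fourth derivative ∂⁴G/∂x²∂y² is unbounded on B₁ \ {0}. -/

import Mathlib

/-- Partial derivative in the first variable. -/
noncomputable def pdx (f : ℝ → ℝ → ℝ) (x y : ℝ) : ℝ := deriv (fun t => f t y) x

/-- Partial derivative in the second variable. -/
noncomputable def pdy (f : ℝ → ℝ → ℝ) (x y : ℝ) : ℝ := deriv (fun t => f x t) y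

/-- Partial derivative in the `i`-th variable, `i ∈ {1, 2}` encoded as `Fin 2`. -/
noncomputable def pd (i : Fin 2) : (ℝ → ℝ → ℝ) → ℝ → ℝ → ℝ :=
  if i = 0 then pdx else pdy

/-- The Laplacian `Δf = ∂²f/∂x² + ∂²f/∂y²`. -/
noncomputable def lap (f : ℝ → ℝ → ℝ) (x y : ℝ) : ℝ :=
  pdx (pdx f) x y + pdy (pdy f) x y

/-!
Take `G = P log (x² + y²)` with `P = x⁴ + y⁴ - 6x²y²` the real part of `(x + iy)⁴`. Under scaling,
`G (c z) = c⁴ (G z + log c * 2 P z)` for `c > 0`. Each derivative preserves this kind of scaling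
law: it lowers the degree by one and differentiates the coefficient `2 P` of the logarithm. As `P`
is harmonic, no logarithm survives in `ΔG`, so the second derivatives of `ΔG` are homogeneous of
degree `0` and continuous off the origin, hence bounded by compactness of the sphere. In
`∂⁴G/∂x²∂y²`, also of degree `0`, the logarithm keeps the coefficient `2 ∂⁴P/∂x²∂y² = -48`.
-/

open Filter Function
open scoped ContDiff Topology

section AssociatedHomogeneous

variable {E V : Type*} [NormedAddCommGroup E] [NormedSpace ℝ E]
  [NormedAddCommGroup V] [NormedSpace ℝ V] {d : ℝ} {f g F G : E → V}

/-- `F` is an associated homogeneous function of degree `d` and order one, in the terminology of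
Gelfand and Shilov: it is smooth off the origin, where dilations act on it with a logarithmic
correction `f`. The case `f = 0` is that of positively homogeneous functions. Nothing is required
at the origin. -/
structure IsAssociatedHomogeneous (d : ℝ) (f F : E → V) : Prop where
  contDiffOn : ContDiffOn ℝ ∞ F {0}ᶜ
  map_smul : ∀ ⦃c : ℝ⦄, 0 < c → ∀ ⦃x : E⦄, x ≠ 0 → F (c • x) = c ^ d • (F x + Real.log c • f x)

namespace IsAssociatedHomogeneous

protected theorem add (hF : IsAssociatedHomogeneous d f F) (hG : IsAssociatedHomogeneous d g G) :
    IsAssociatedHomogeneous d (f + g) (F + G) where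
  contDiffOn := hF.contDiffOn.add hG.contDiffOn
  map_smul c hc x hx := by
    simp only [Pi.add_apply, hF.map_smul hc hx, hG.map_smul hc hx]
    module

theorem contDiffOn_logCoeff (hF : IsAssociatedHomogeneous d f F) : ContDiffOn ℝ ∞ f {0}ᶜ := by
  set e := Real.exp 1
  have he : 0 < e := Real.exp_pos 1
  have hf : ∀ x ∈ ({0}ᶜ : Set E), f x = (e ^ d)⁻¹ • F (e • x) - F x := fun x hx ↦ by
    rw [hF.map_smul he hx, Real.log_exp, inv_smul_smul₀ (Real.rpow_pos_of_pos he d).ne', one_smul,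
      add_sub_cancel_left]
  have hcomp : ContDiffOn ℝ ∞ (fun x ↦ F (e • x)) {0}ᶜ :=
    hF.contDiffOn.comp (contDiff_const_smul e).contDiffOn fun x hx ↦ smul_ne_zero he.ne' hx
  exact ((hcomp.const_smul _).sub hF.contDiffOn).congr hf

protected theorem differentiableAt (hF : IsAssociatedHomogeneous d f F) {x : E} (hx : x ≠ 0) :
    DifferentiableAt ℝ F x :=
  (hF.contDiffOn.contDiffAt (isOpen_compl_singleton.mem_nhds hx)).differentiableAt (by simp)

theorem differentiableAt_logCoeff (hF : IsAssociatedHomogeneous d f F) {x : E} (hx : x ≠ 0) :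
    DifferentiableAt ℝ f x :=
  (hF.contDiffOn_logCoeff.contDiffAt (isOpen_compl_singleton.mem_nhds hx)).differentiableAt
    (by simp)

theorem fderiv_smul (hF : IsAssociatedHomogeneous d f F) {c : ℝ} (hc : 0 < c) {x : E}
    (hx : x ≠ 0) :
    fderiv ℝ F (c • x) = c ^ (d - 1) • (fderiv ℝ F x + Real.log c • fderiv ℝ f x) := by
  have hFx := hF.differentiableAt hx
  have hfx := hF.differentiableAt_logCoeff hx
  have hscale : (fun y ↦ F (c • y)) =ᶠ[𝓝 x] c ^ d • (F + Real.log c • f) := by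
    filter_upwards [isOpen_compl_singleton.mem_nhds hx] with y hy using hF.map_smul hc hy
  have hderiv : c • fderiv ℝ F (c • x) = c ^ d • (fderiv ℝ F x + Real.log c • fderiv ℝ f x) := by
    rw [← fderiv_comp_smul, hscale.fderiv_eq, fderiv_const_smul (hFx.add (hfx.const_smul _)),
      fderiv_add hFx (hfx.const_smul _), fderiv_const_smul hfx]
  rw [← inv_smul_smul₀ hc.ne' (fderiv ℝ F (c • x)), hderiv, smul_smul, Real.rpow_sub_one hc.ne',
    div_eq_inv_mul]

protected theorem lineDeriv (hF : IsAssociatedHomogeneous d f F) (v : E) :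
    IsAssociatedHomogeneous (d - 1) (lineDeriv ℝ f · v) (lineDeriv ℝ F · v) where
  contDiffOn :=
    ((hF.contDiffOn.fderiv_of_isOpen isOpen_compl_singleton (m := ∞) (by simp)).clm_apply
      contDiffOn_const).congr fun _ hx ↦ (hF.differentiableAt hx).lineDeriv_eq_fderiv
  map_smul c hc x hx := by
    rw [(hF.differentiableAt (smul_ne_zero hc.ne' hx)).lineDeriv_eq_fderiv,
      (hF.differentiableAt hx).lineDeriv_eq_fderiv,
      (hF.differentiableAt_logCoeff hx).lineDeriv_eq_fderiv, hF.fderiv_smul hc hx]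
    rfl

theorem exists_norm_le [ProperSpace E] (hF : IsAssociatedHomogeneous 0 0 F) :
    ∃ M, ∀ x ≠ 0, ‖F x‖ ≤ M := by
  have hsphere : Metric.sphere (0 : E) 1 ⊆ {0}ᶜ := fun x hx ↦
    Metric.ne_of_mem_sphere hx one_ne_zero
  obtain ⟨M, hM⟩ := (isCompact_sphere (0 : E) 1).exists_bound_of_continuousOn
    (hF.contDiffOn.continuousOn.mono hsphere)
  refine ⟨M, fun x hx ↦ ?_⟩
  have hradial : F (‖x‖⁻¹ • x) = F x := by
    simpa using hF.map_smul (inv_pos.2 (norm_pos_iff.2 hx)) hx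
  rw [← hradial]
  exact hM _ (by simp [norm_smul, hx])

theorem tendsto_norm_atTop (hF : IsAssociatedHomogeneous 0 f F) {x : E} (hx : x ≠ 0)
    (hfx : f x ≠ 0) : Tendsto (fun c : ℝ ↦ ‖F (c • x)‖) (𝓝[>] 0) atTop := by
  have hlog : Tendsto (fun c ↦ |Real.log c| * ‖f x‖ - ‖F x‖) (𝓝[>] 0) atTop :=
    tendsto_atTop_add_const_right _ _ <|
      (tendsto_abs_atBot_atTop.comp Real.tendsto_log_nhdsGT_zero).atTop_mul_const
        (norm_pos_iff.2 hfx)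
  refine tendsto_atTop_mono' _ ?_ hlog
  filter_upwards [self_mem_nhdsWithin] with c hc
  rw [hF.map_smul hc hx, Real.rpow_zero, one_smul, ← Real.norm_eq_abs, ← norm_smul, add_comm]
  exact norm_sub_le_norm_add _ _

theorem not_isBoundedUnder (hF : IsAssociatedHomogeneous 0 f F) {x : E} (hx : x ≠ 0)
    (hfx : f x ≠ 0) : ¬ (𝓝[≠] (0 : E)).IsBoundedUnder (· ≤ ·) (‖F ·‖) := by
  have hray : Tendsto (fun c : ℝ ↦ c • x) (𝓝[>] 0) (𝓝[≠] 0) := by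
    refine tendsto_nhdsWithin_iff.2 ⟨?_, ?_⟩
    · exact (Continuous.tendsto' (by fun_prop) 0 0 (zero_smul ℝ x)).mono_left nhdsWithin_le_nhds
    · filter_upwards [self_mem_nhdsWithin] with c hc using smul_ne_zero (ne_of_gt hc) hx
  have hlim : Tendsto (‖F ·‖) (map (· • x) (𝓝[>] (0 : ℝ))) atTop :=
    tendsto_map' (hF.tendsto_norm_atTop hx hfx)
  exact fun hbdd ↦ not_isBoundedUnder_of_tendsto_atTop hlim (hbdd.mono hray)

end IsAssociatedHomogeneous

end AssociatedHomogeneous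

section Plane

variable {d : ℝ} {f F : ℝ → ℝ → ℝ}

theorem uncurry_pdx (f : ℝ → ℝ → ℝ) :
    uncurry (pdx f) = fun p ↦ lineDeriv ℝ (uncurry f) p (1, 0) := by
  ext ⟨x, y⟩
  simp [pdx, lineDeriv, deriv_comp_const_add (fun t ↦ f t y)]

theorem uncurry_pdy (f : ℝ → ℝ → ℝ) :
    uncurry (pdy f) = fun p ↦ lineDeriv ℝ (uncurry f) p (0, 1) := by
  ext ⟨x, y⟩
  simp [pdy, lineDeriv, deriv_comp_const_add (f x)]

theorem pd_zero (i : Fin 2) : pd i 0 = 0 := by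
  ext x y
  unfold pd
  split_ifs <;> exact deriv_const _ _

theorem sq_add_sq_pos {p : ℝ × ℝ} (hp : p ≠ 0) : 0 < p.1 ^ 2 + p.2 ^ 2 := by
  refine (add_nonneg (sq_nonneg _) (sq_nonneg _)).lt_of_ne' fun h ↦ hp ?_
  simpa [add_eq_zero_iff_of_nonneg, sq_nonneg, Prod.ext_iff] using h

namespace IsAssociatedHomogeneous

protected theorem pdx (hF : IsAssociatedHomogeneous d (uncurry f) (uncurry F)) :
    IsAssociatedHomogeneous (d - 1) (uncurry (pdx f)) (uncurry (pdx F)) := by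
  simpa only [uncurry_pdx] using hF.lineDeriv (1, 0)

protected theorem pdy (hF : IsAssociatedHomogeneous d (uncurry f) (uncurry F)) :
    IsAssociatedHomogeneous (d - 1) (uncurry (pdy f)) (uncurry (pdy F)) := by
  simpa only [uncurry_pdy] using hF.lineDeriv (0, 1)

protected theorem pd (hF : IsAssociatedHomogeneous d (uncurry f) (uncurry F)) (i : Fin 2) :
    IsAssociatedHomogeneous (d - 1) (uncurry (pd i f)) (uncurry (pd i F)) := by
  unfold pd
  split_ifs
  exacts [hF.pdx, hF.pdy]

protected theorem lap (hF : IsAssociatedHomogeneous d (uncurry f) (uncurry F)) :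
    IsAssociatedHomogeneous (d - 1 - 1) (uncurry (lap f)) (uncurry (lap F)) :=
  hF.pdx.pdx.add hF.pdy.pdy

theorem exists_abs_pd_pd_le (hF : IsAssociatedHomogeneous 2 0 (uncurry F)) (i j : Fin 2) :
    ∃ M, ∀ p : ℝ × ℝ, p ≠ 0 → |pd i (pd j F) p.1 p.2| ≤ M := by
  have hpd : IsAssociatedHomogeneous (2 - 1 - 1) (uncurry (pd i (pd j 0)))
      (uncurry (pd i (pd j F))) := (hF.pd j).pd i
  rw [pd_zero, pd_zero, show (2 - 1 - 1 : ℝ) = 0 by norm_num] at hpd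
  exact hpd.exists_norm_le

theorem mul_log_sq_add_sq (hF : IsAssociatedHomogeneous d 0 (uncurry F)) :
    IsAssociatedHomogeneous d (uncurry (2 * F))
      (uncurry fun x y ↦ F x y * Real.log (x ^ 2 + y ^ 2)) where
  contDiffOn := hF.contDiffOn.mul <|
    ContDiffOn.log (by fun_prop) fun _ hp ↦ (sq_add_sq_pos hp).ne'
  map_smul c hc p hp := by
    have hscale : F (c * p.1) (c * p.2) = c ^ d * F p.1 p.2 := by
      simpa using! hF.map_smul hc hp
    have hlog : Real.log ((c * p.1) ^ 2 + (c * p.2) ^ 2) =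
        2 * Real.log c + Real.log (p.1 ^ 2 + p.2 ^ 2) := by
      rw [mul_pow, mul_pow, ← mul_add, Real.log_mul (pow_ne_zero 2 hc.ne') (sq_add_sq_pos hp).ne',
        Real.log_pow, Nat.cast_ofNat]
    change F (c * p.1) (c * p.2) * Real.log ((c * p.1) ^ 2 + (c * p.2) ^ 2) =
      c ^ d * (F p.1 p.2 * Real.log (p.1 ^ 2 + p.2 ^ 2) + Real.log c * (2 * F p.1 p.2))
    rw [hscale, hlog]
    ring

end IsAssociatedHomogeneous

/-- The harmonic polynomial `Re (x + iy)⁴`. -/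
def harmonicQuartic (x y : ℝ) : ℝ := x ^ 4 + y ^ 4 - 6 * x ^ 2 * y ^ 2

theorem isAssociatedHomogeneous_harmonicQuartic :
    IsAssociatedHomogeneous 4 0 (uncurry harmonicQuartic) where
  contDiffOn := by
    unfold harmonicQuartic uncurry
    fun_prop
  map_smul c _ p _ := by
    simp only [uncurry, harmonicQuartic, Prod.smul_fst, Prod.smul_snd, smul_eq_mul,
      Pi.zero_apply, mul_zero, add_zero, Real.rpow_ofNat]
    ring

theorem pdx_pdx_two_mul_harmonicQuartic :
    pdx (pdx (2 * harmonicQuartic)) = fun x y ↦ 24 * (x ^ 2 - y ^ 2) := by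
  have hpdx : pdx (2 * harmonicQuartic) = fun x y ↦ 8 * x ^ 3 - 24 * x * y ^ 2 := by
    ext x y
    simp (disch := fun_prop) only [pdx, Pi.mul_apply, Pi.ofNat_apply, harmonicQuartic,
      deriv_const_mul, deriv_fun_sub, deriv_fun_add, deriv_const, deriv_fun_pow, deriv_id'',
      deriv_mul_const]
    ring
  ext x y
  rw [hpdx]
  simp (disch := fun_prop) only [pdx, deriv_fun_sub, deriv_const_mul, deriv_mul_const,
    deriv_fun_pow, deriv_id'', deriv_const_mul_id']
  ring

theorem pdy_pdy_two_mul_harmonicQuartic :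
    pdy (pdy (2 * harmonicQuartic)) = fun x y ↦ 24 * (y ^ 2 - x ^ 2) := by
  have hpdy : pdy (2 * harmonicQuartic) = fun x y ↦ 8 * y ^ 3 - 24 * x ^ 2 * y := by
    ext x y
    simp (disch := fun_prop) only [pdy, Pi.mul_apply, Pi.ofNat_apply, harmonicQuartic,
      deriv_const_mul, deriv_fun_sub, deriv_fun_add, deriv_const, deriv_fun_pow, deriv_id'']
    ring
  ext x y
  rw [hpdy]
  simp (disch := fun_prop) only [pdy, deriv_fun_sub, deriv_const_mul, deriv_fun_pow, deriv_id'',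
    deriv_const_mul_id']
  ring

theorem lap_two_mul_harmonicQuartic : lap (2 * harmonicQuartic) = 0 := by
  ext x y
  simp only [lap, pdx_pdx_two_mul_harmonicQuartic, pdy_pdy_two_mul_harmonicQuartic,
    Pi.zero_apply]
  ring

theorem pdx_pdx_pdy_pdy_two_mul_harmonicQuartic :
    pdx (pdx (pdy (pdy (2 * harmonicQuartic)))) = fun _ _ ↦ -48 := by
  have hpdx : pdx (pdy (pdy (2 * harmonicQuartic))) = fun x _ ↦ -48 * x := by
    ext x y
    rw [pdy_pdy_two_mul_harmonicQuartic]
    simp (disch := fun_prop) only [pdx, deriv_const_mul, deriv_fun_sub, deriv_const,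
      deriv_fun_pow, deriv_id'']
    ring
  ext x y
  rw [hpdx]
  simp [pdx]

end Plane

/-- There is a function `G`, smooth away from the origin, with all second derivatives
of `ΔG` bounded on the punctured unit ball, while `∂⁴G/∂x²∂y²` is unbounded there. -/
theorem exists_G_laplacian_derivs_bounded_fourth_deriv_unbounded :
    ∃ G : ℝ → ℝ → ℝ,
      ContDiffOn ℝ (⊤ : ℕ∞) (fun p : ℝ × ℝ => G p.1 p.2) {p : ℝ × ℝ | p ≠ (0, 0)} ∧
      (∀ i j : Fin 2, ∃ M : ℝ, ∀ x y : ℝ,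
        0 < x ^ 2 + y ^ 2 → x ^ 2 + y ^ 2 < 1 → |pd i (pd j (lap G)) x y| ≤ M) ∧
      ¬ (∃ M : ℝ, ∀ x y : ℝ,
        0 < x ^ 2 + y ^ 2 → x ^ 2 + y ^ 2 < 1 →
          |pdx (pdx (pdy (pdy G))) x y| ≤ M) := by
  have hG := isAssociatedHomogeneous_harmonicQuartic.mul_log_sq_add_sq
  refine ⟨fun x y ↦ harmonicQuartic x y * Real.log (x ^ 2 + y ^ 2), hG.contDiffOn,
    fun i j ↦ ?_, ?_⟩
  · have hlap := hG.lap
    rw [lap_two_mul_harmonicQuartic, show (4 - 1 - 1 : ℝ) = 2 by norm_num] at hlap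
    obtain ⟨M, hM⟩ := hlap.exists_abs_pd_pd_le i j
    exact ⟨M, fun x y hpos _ ↦ hM (x, y) (by rintro ⟨⟩; simp at hpos)⟩
  · rintro ⟨M, hM⟩
    have hderiv := hG.pdy.pdy.pdx.pdx
    rw [pdx_pdx_pdy_pdy_two_mul_harmonicQuartic,
      show (4 - 1 - 1 - 1 - 1 : ℝ) = 0 by norm_num] at hderiv
    have hball : ∀ᶠ p : ℝ × ℝ in 𝓝 0, p.1 ^ 2 + p.2 ^ 2 < 1 :=
      ContinuousAt.eventually_lt (by fun_prop) continuousAt_const (by simp)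
    refine hderiv.not_isBoundedUnder (x := (1, 0)) (by simp) (by simp [uncurry])
      (isBoundedUnder_of_eventually_le (a := M) ?_)
    filter_upwards [self_mem_nhdsWithin, nhdsWithin_le_nhds hball] with p hp hlt
      using hM p.1 p.2 (sq_add_sq_pos hp) hlt
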